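/- The Steiner triple system of order 25 on Z_5 × Z_5 obtained by developing the base blocks {(0,0),(0,1),(2,3)}, {(0,0),(1,2),(2,0)}, {(0,0),(1,0),(3,1)} modulo 5 independently in both coordinates is nonsequenceable; moreover, for every point x ∈ Z_5 × Z_5 there exists an almost parallel class of this system that does not contain x. -/

import Mathlib

/-- `B` is (the block set of) a partial Steiner triple system on the point set `X`:
every block has 3 points and every pair of distinct points lies in at most one block. -/
def isPSTS {X : Type*} [DecidableEq X] (B : Finset (Finset X)) : Prop :=
  (∀ b ∈ B, b.card = 3) ∧
  ∀ p q : X, p ≠ q → (B.filter (fun b => p ∈ b ∧ q ∈ b)).card ≤ 1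

/-- `B` is (the block set of) a Steiner triple system on the point set `X`:
every block has 3 points and every pair of distinct points lies in exactly one block. -/
def isSTS {X : Type*} [DecidableEq X] (B : Finset (Finset X)) : Prop :=
  (∀ b ∈ B, b.card = 3) ∧
  ∀ p q : X, p ≠ q → (B.filter (fun b => p ∈ b ∧ q ∈ b)).card = 1

/-- The finset `S` can be partitioned into blocks of `B`. -/
def blocksPartition {X : Type*} [DecidableEq X] (B : Finset (Finset X)) (S : Finset X) : Prop :=
  ∃ P : Finset (Finset X), P ⊆ B ∧
    (∀ b₁ ∈ P, ∀ b₂ ∈ P, b₁ ≠ b₂ → Disjoint b₁ b₂) ∧ P.biUnion id = S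

/-- `A` is an almost parallel class of `B`: a set of pairwise disjoint blocks
covering all points of `X` except exactly one. -/
def isAPC {X : Type*} [DecidableEq X] [Fintype X] (B A : Finset (Finset X)) : Prop :=
  A ⊆ B ∧ (∀ b₁ ∈ A, ∀ b₂ ∈ A, b₁ ≠ b₂ → Disjoint b₁ b₂) ∧
    ∃ y : X, A.biUnion id = Finset.univ.erase y

/-- `B` is sequenceable: there is a sequencing of the points (a bijection from
`Fin n` to `X`) such that no proper segment can be partitioned into blocks of `B`. -/
def sequenceable {X : Type*} [DecidableEq X] [Fintype X] (B : Finset (Finset X)) : Prop :=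
  ∃ f : Fin (Fintype.card X) ≃ X,
    ∀ i j : Fin (Fintype.card X), i ≤ j →
      ¬((i : ℕ) = 0 ∧ (j : ℕ) = Fintype.card X - 1) →
      ¬ blocksPartition B ((Finset.Icc i j).image f)

/-- The blocks obtained by developing the base blocks over `ZMod 5 × ZMod 5`. -/
def dev25 : Finset (Finset (ZMod 5 × ZMod 5)) :=
  Finset.univ.biUnion fun g : ZMod 5 × ZMod 5 =>
    ({{(0,0),(0,1),(2,3)}, {(0,0),(1,2),(2,0)}, {(0,0),(1,0),(3,1)}} :
        Finset (Finset (ZMod 5 × ZMod 5))).image (fun b => b.image (· + g))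

/-- An almost parallel class missing `(0,0)`. -/
def apcBase : Finset (Finset (ZMod 5 × ZMod 5)) :=
  {{(0,1),(0,2),(2,4)}, {(0,3),(3,3),(4,0)}, {(0,4),(3,1),(3,2)}, {(1,0),(2,2),(3,0)},
    {(1,1),(1,2),(3,4)}, {(1,3),(2,3),(4,4)}, {(1,4),(4,1),(4,2)}, {(2,0),(2,1),(4,3)}}

/-- Its translate by `x`, missing `x`. -/
def apc25 (x : ZMod 5 × ZMod 5) : Finset (Finset (ZMod 5 × ZMod 5)) :=
  apcBase.image (fun b => b.image (· + x))

theorem apc25_sub : ∀ x, apc25 x ⊆ dev25 := by decide +kernel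

theorem apcBase_disj : ∀ b₁ ∈ apcBase, ∀ b₂ ∈ apcBase, b₁ = b₂ ∨ b₁ ∩ b₂ = ∅ := by
  simp only [apcBase, Finset.forall_mem_insert, Finset.mem_singleton, forall_eq]
  refine ⟨?_, ?_, ?_, ?_, ?_, ?_, ?_, ?_⟩ <;> refine ⟨?_, ?_, ?_, ?_, ?_, ?_, ?_, ?_⟩ <;>
    first | exact Or.inl trivial | exact Or.inr (by decide +kernel)

theorem apc25_disj (x : ZMod 5 × ZMod 5) :
    ∀ b₁ ∈ apc25 x, ∀ b₂ ∈ apc25 x, b₁ ≠ b₂ → Disjoint b₁ b₂ := by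
  intro b₁ h₁ b₂ h₂ hne
  obtain ⟨c₁, hc₁, rfl⟩ := Finset.mem_image.1 h₁
  obtain ⟨c₂, hc₂, rfl⟩ := Finset.mem_image.1 h₂
  rcases apcBase_disj c₁ hc₁ c₂ hc₂ with h | h
  · exact absurd (by rw [h]) hne
  · exact (Finset.disjoint_image (add_left_injective x)).2 (Finset.disjoint_iff_inter_eq_empty.2 h)

theorem apc25_union : ∀ x, (apc25 x).biUnion id = Finset.univ.erase x := by decide +kernel

theorem stmt8 :
    ¬ sequenceable dev25 ∧
    (∀ x : ZMod 5 × ZMod 5, ∃ A : Finset (Finset (ZMod 5 × ZMod 5)),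
      isAPC dev25 A ∧ x ∉ A.biUnion id) := by
  constructor
  · rintro ⟨f, hf⟩
    have hc : Fintype.card (ZMod 5 × ZMod 5) = 25 := by decide +kernel
    have h0 : 0 < Fintype.card (ZMod 5 × ZMod 5) := by omega
    have h23 : 23 < Fintype.card (ZMod 5 × ZMod 5) := by omega
    have h24 : 24 < Fintype.card (ZMod 5 × ZMod 5) := by omega
    refine hf ⟨0, h0⟩ ⟨23, h23⟩ (by simp) (by simp only [hc]; omega) ?_
    refine ⟨apc25 (f ⟨24, h24⟩), apc25_sub _, apc25_disj _, ?_⟩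
    rw [apc25_union]
    ext y
    obtain ⟨k, rfl⟩ := f.surjective y
    have hk := k.isLt
    have hm : f k ∈ (Finset.Icc (⟨0, h0⟩ : Fin _) ⟨23, h23⟩).image f ↔
        k ∈ Finset.Icc (⟨0, h0⟩ : Fin _) ⟨23, h23⟩ := f.injective.mem_finset_image
    rw [hm]
    simp only [Finset.mem_erase, Finset.mem_univ, and_true, Finset.mem_Icc,
      f.apply_eq_iff_eq, ne_eq, Fin.ext_iff, Fin.le_def]
    omega
  · intro x
    refine ⟨apc25 x, ⟨apc25_sub x, apc25_disj x, x, apc25_union x⟩, ?_⟩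
    rw [apc25_union]
    simp
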